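/- Let d ≥ 1, let r0, r1 ≥ 0 with r0 + r1 < 1, and let b1 ∈ ℝ³, b2 ∈ ℝ^d. Let P be a Borel probability measure on {0,1} × ℝ^d × ℝ⁴ with coordinates (g, x, γ) such that, P-almost surely, E_P[g | (x, γ)] = r0 + (1 − r0 − r1)·Φ((c(r0,r1) + C(r0,r1)γ)·b1 + x·b2). Then there exist a probability space (Ω, 𝒜, μ) and random variables G : Ω → ℝ taking values in {0,1}, X : Ω → ℝ^d, Γ : Ω → ℝ⁴, Γ* : Ω → ℝ³, ε : Ω → ℝ such that: (i) the law of the triple (G, X, Γ) under μ equals P; (ii) ε has standard normal law N(0,1) and is independent of σ(X, Γ, Γ*); (iii) Γ* = c(r0,r1) + C(r0,r1)·Γ μ-almost surely; and (iv) setting G* := 1{Γ*·b1 + X·b2 + ε ≥ 0}, one has E[G | σ(X, Γ, Γ*, ε)] = r0 + (1 − r0 − r1)·G* μ-almost surely. -/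

import Mathlib

open MeasureTheory ProbabilityTheory Matrix

/-- The 4×4 matrix `D(r0,r1)` from Lemma 2 of the paper, with `s = 1 − r0 − r1`. -/
def Dmat (r0 r1 : ℝ) : Matrix (Fin 4) (Fin 4) ℝ :=
  !![1 - r0 - r1, 0, 0, 0;
     0, 1 - r0 - r1, 0, 0;
     0, 0, (1 - r0 - r1) ^ 2, r0 * (1 - r0 - r1);
     0, 0, 0, 1 - r0 - r1]

/-- The 3×4 selection matrix `S = [I₃ | 0]`. -/
def Smat : Matrix (Fin 3) (Fin 4) ℝ :=
  !![1, 0, 0, 0;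
     0, 1, 0, 0;
     0, 0, 1, 0]

/-- The vector `v(r0) = (r0, r0, r0², r0)`. -/
def vvec (r0 : ℝ) : Fin 4 → ℝ := ![r0, r0, r0 ^ 2, r0]

/-- The 3×4 matrix `C(r0,r1) = S · D(r0,r1)⁻¹`. -/
noncomputable def Cmat (r0 r1 : ℝ) : Matrix (Fin 3) (Fin 4) ℝ := Smat * (Dmat r0 r1)⁻¹

/-- The vector `c(r0,r1) = −C(r0,r1)·v(r0) ∈ ℝ³`. -/
noncomputable def cvec (r0 r1 : ℝ) : Fin 3 → ℝ := -(Cmat r0 r1).mulVec (vvec r0)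

/-- The standard normal density `φ(x) = (2π)^{−1/2}·exp(−x²/2)`. -/
noncomputable def stdNormalPdf (x : ℝ) : ℝ :=
  (Real.sqrt (2 * Real.pi))⁻¹ * Real.exp (-x ^ 2 / 2)

/-- The standard normal cdf `Φ(t) = ∫_{−∞}^t φ(x) dx`. -/
noncomputable def stdNormalCdf (t : ℝ) : ℝ := ∫ x in Set.Iic t, stdNormalPdf x

/-!
Take `(X, Γ)` with its law under `P`, a shock `ε` and a uniform variable `U` on `[0, 1]`, all
independent, and let `G` be the indicator of `U ≤ r0 + (1 - r0 - r1) · G*`. Integrating out `U`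
gives the conditional expectation of `G` given `(X, Γ, ε)`; integrating out `ε` as well turns the
moment equality into the statement that `(G, X, Γ)` and `P` have the same conditional mean of the
first coordinate given the others. A binary variable is determined by its mean, so the two laws
agree.
-/

open scoped unitInterval

section Prod

variable {α β : Type*} [MeasurableSpace α] [MeasurableSpace β]
  {F : Type*} [NormedAddCommGroup F] [NormedSpace ℝ F] {μ : Measure α} {ν : Measure β}
  {f : α × β → F}

lemma setIntegral_prod_fst_preimage [SFinite μ] [SFinite ν] (hf : Integrable f (μ.prod ν))
    (s : Set α) :
    ∫ ω in Prod.fst ⁻¹' s, f ω ∂μ.prod ν = ∫ a in s, ∫ b, f (a, b) ∂ν ∂μ := by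
  rw [← Set.prod_univ, setIntegral_prod _ hf.integrableOn, Measure.restrict_univ]

lemma condExp_prod_comap_fst [CompleteSpace F] [IsFiniteMeasure μ] [IsProbabilityMeasure ν]
    (hf : Integrable f (μ.prod ν)) :
    (μ.prod ν)[f | MeasurableSpace.comap Prod.fst inferInstance] =ᵐ[μ.prod ν]
      fun ω => ∫ b, f (ω.1, b) ∂ν := by
  have mean_integrable : Integrable (fun ω : α × β => ∫ b, f (ω.1, b) ∂ν) (μ.prod ν) :=
    hf.integral_prod_left.comp_fst ν
  refine (ae_eq_condExp_of_forall_setIntegral_eq measurable_fst.comap_le hf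
    (fun _ _ _ => mean_integrable.integrableOn) ?_ ?_).symm
  · rintro _ ⟨s, -, rfl⟩ -
    simp [setIntegral_prod_fst_preimage mean_integrable, setIntegral_prod_fst_preimage hf]
  · refine AEStronglyMeasurable.comp_ae_measurable' (f := fun a => ∫ b, f (a, b) ∂ν) ?_
      measurable_fst.aemeasurable
    rw [measurePreserving_fst.map_eq]
    exact hf.integral_prod_left.aestronglyMeasurable

end Prod

lemma comap_comp_of_leftInverse {Ω α β : Type*} [MeasurableSpace α] [MeasurableSpace β]
    {φ : α → β} {ψ : β → α} (hφ : Measurable φ) (hψ : Measurable ψ)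
    (hψφ : Function.LeftInverse ψ φ) (f : Ω → α) :
    MeasurableSpace.comap (φ ∘ f) inferInstance = MeasurableSpace.comap f inferInstance := by
  refine le_antisymm (hφ.comp (comap_measurable f)).comap_le ?_
  have f_eq : f = ψ ∘ φ ∘ f := by rw [← Function.comp_assoc, hψφ.comp_eq_id, Function.id_comp]
  conv_lhs => rw [f_eq]
  exact (hψ.comp (comap_measurable (φ ∘ f))).comap_le

lemma indepFun_prod_prod_snd_fst {α β γ : Type*} [MeasurableSpace α] [MeasurableSpace β]
    [MeasurableSpace γ] (μ : Measure α) (ν : Measure β) (ρ : Measure γ) [IsProbabilityMeasure μ]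
    [IsProbabilityMeasure ν] [IsProbabilityMeasure ρ] :
    IndepFun (fun ω => ω.1.2) (fun ω => ω.1.1) ((μ.prod ν).prod ρ) := by
  have fst_map : ((μ.prod ν).prod ρ).map (fun ω => ω.1.1) = μ :=
    (measurePreserving_fst.comp measurePreserving_fst).map_eq
  have snd_map : ((μ.prod ν).prod ρ).map (fun ω => ω.1.2) = ν :=
    (measurePreserving_snd.comp measurePreserving_fst).map_eq
  refine IndepFun.symm ((indepFun_iff_map_prod_eq_prod_map_map (by fun_prop) (by fun_prop)).2 ?_)
  rw [fst_map, snd_map]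
  exact measurePreserving_fst.map_eq

lemma integrable_of_ae_eq_zero_or_one {Ω : Type*} [MeasurableSpace Ω] {μ : Measure Ω}
    [IsFiniteMeasure μ] {f : Ω → ℝ} (hfm : AEMeasurable f μ) (hf : ∀ᵐ ω ∂μ, f ω = 0 ∨ f ω = 1) :
    Integrable f μ :=
  .of_mem_Icc 0 1 hfm <| hf.mono fun ω hω => by rcases hω with h | h <;> simp [h]

section BinaryLaw

variable {E : Type*} [MeasurableSpace E] {P P' : Measure (ℝ × E)} [IsFiniteMeasure P]
  [IsFiniteMeasure P']

lemma measureReal_prod_of_ae_fst_eq_zero_or_one (hP : ∀ᵐ p ∂P, p.1 = 0 ∨ p.1 = 1) {A : Set ℝ}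
    {B : Set E} (hA : MeasurableSet A) (hB : MeasurableSet B) :
    P.real (A ×ˢ B) = A.indicator 1 1 * (∫ p in Prod.snd ⁻¹' B, p.1 ∂P) +
      A.indicator 1 0 * (P.snd.real B - ∫ p in Prod.snd ⁻¹' B, p.1 ∂P) := by
  have fst_integrable : Integrable (fun p => p.1) (P.restrict (Prod.snd ⁻¹' B)) :=
    (integrable_of_ae_eq_zero_or_one measurable_fst.aemeasurable hP).integrableOn
  have one_sub_integrable : Integrable (fun p => 1 - p.1) (P.restrict (Prod.snd ⁻¹' B)) :=
    (integrable_const 1).sub fst_integrable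
  have indicator_eq : (A ×ˢ B).indicator 1 =ᵐ[P] (Prod.snd ⁻¹' B).indicator fun p =>
      A.indicator 1 1 * p.1 + A.indicator 1 0 * (1 - p.1) := by
    filter_upwards [hP] with ⟨g, e⟩ hg
    by_cases he : e ∈ B <;> by_cases hgA : g ∈ A <;> rcases hg with rfl | rfl <;>
      simp [Set.indicator_of_mem, Set.indicator_of_notMem, he, hgA]
  calc P.real (A ×ˢ B)
      = ∫ p in Prod.snd ⁻¹' B, (A.indicator 1 1 * p.1 + A.indicator 1 0 * (1 - p.1)) ∂P := by
        rw [← integral_indicator_one (hA.prod hB), integral_congr_ae indicator_eq,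
          integral_indicator (measurable_snd hB)]
    _ = _ := by
        rw [integral_add (fst_integrable.const_mul _) (one_sub_integrable.const_mul _),
          integral_const_mul, integral_const_mul, integral_sub (integrable_const 1) fst_integrable,
          Measure.snd, map_measureReal_apply measurable_snd hB]
        simp

lemma measure_ext_of_ae_fst_eq_zero_or_one (hP : ∀ᵐ p ∂P, p.1 = 0 ∨ p.1 = 1)
    (hP' : ∀ᵐ p ∂P', p.1 = 0 ∨ p.1 = 1) (hsnd : P.snd = P'.snd)
    (hmean : ∀ B, MeasurableSet B →
      ∫ p in Prod.snd ⁻¹' B, p.1 ∂P = ∫ p in Prod.snd ⁻¹' B, p.1 ∂P') :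
    P = P' := by
  refine Measure.ext_prod fun {A B} hA hB => (measureReal_eq_measureReal_iff).1 ?_
  rw [measureReal_prod_of_ae_fst_eq_zero_or_one hP hA hB,
    measureReal_prod_of_ae_fst_eq_zero_or_one hP' hA hB, hsnd, hmean B hB]

end BinaryLaw

section BernoulliDraw

variable {α : Type*}

/-- The binary variable with success probability `p a` given `a`, realised by comparing `p a` with
an auxiliary point of the unit interval, to be drawn uniformly. -/
noncomputable def bernoulliDraw (p : α → I) (ω : α × I) : ℝ :=
  if ω.2 ≤ p ω.1 then 1 else 0

lemma bernoulliDraw_eq_zero_or_one (p : α → I) (ω : α × I) :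
    bernoulliDraw p ω = 0 ∨ bernoulliDraw p ω = 1 := by
  simp [bernoulliDraw, lt_or_ge]

lemma integral_bernoulliDraw (p : α → I) (a : α) : ∫ u, bernoulliDraw p (a, u) = p a := by
  have draw_eq : (fun u => bernoulliDraw p (a, u)) = (Set.Iic (p a)).indicator 1 := by
    ext u
    simp [bernoulliDraw, Set.indicator]
  rw [draw_eq, integral_indicator_one measurableSet_Iic, measureReal_def, unitInterval.volume_Iic,
    ENNReal.toReal_ofReal (p a).2.1]

variable [MeasurableSpace α] {E S : Type*} [MeasurableSpace E] [MeasurableSpace S] {p : α → I}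

lemma measurable_bernoulliDraw (hp : Measurable p) : Measurable (bernoulliDraw p) :=
  .ite (measurableSet_le measurable_snd (hp.comp measurable_fst)) measurable_const measurable_const

lemma integrable_bernoulliDraw (hp : Measurable p) (μ : Measure (α × I)) [IsFiniteMeasure μ] :
    Integrable (bernoulliDraw p) μ :=
  integrable_of_ae_eq_zero_or_one (measurable_bernoulliDraw hp).aemeasurable
    (.of_forall (bernoulliDraw_eq_zero_or_one p))

lemma condExp_bernoulliDraw (hp : Measurable p) (μ : Measure α) [IsFiniteMeasure μ] :
    (μ.prod volume)[bernoulliDraw p | MeasurableSpace.comap Prod.fst inferInstance]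
      =ᵐ[μ.prod volume] fun ω => (p ω.1 : ℝ) := by
  simpa only [integral_bernoulliDraw] using condExp_prod_comap_fst (μ := μ) (ν := volume)
    (integrable_bernoulliDraw hp _)

lemma setIntegral_bernoulliDraw_prod {q : E × S → I} (hq : Measurable q) (μ : Measure E)
    (ν : Measure S) [IsFiniteMeasure μ] [IsFiniteMeasure ν] (B : Set E) :
    ∫ ω in (fun ω => ω.1.1) ⁻¹' B, bernoulliDraw q ω ∂(μ.prod ν).prod volume =
      ∫ e in B, ∫ s, (q (e, s) : ℝ) ∂ν ∂μ := by
  have q_integrable : Integrable (fun a => (q a : ℝ)) (μ.prod ν) :=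
    .of_mem_Icc 0 1 (by fun_prop) (.of_forall fun a => (q a).2)
  rw [← setIntegral_prod_fst_preimage q_integrable]
  simp_rw [← integral_bernoulliDraw q]
  exact setIntegral_prod_fst_preimage (integrable_bernoulliDraw hq _) (Prod.fst ⁻¹' B)

lemma map_bernoulliDraw_of_condExp_eq {P : Measure (ℝ × E)} [IsFiniteMeasure P] {ν : Measure S}
    [IsProbabilityMeasure ν] {q : E × S → I} (hq : Measurable q)
    (hP : ∀ᵐ z ∂P, z.1 = 0 ∨ z.1 = 1)
    (hmean : P[(fun z => z.1) | MeasurableSpace.comap Prod.snd inferInstance] =ᵐ[P]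
      fun z => ∫ s, (q (z.2, s) : ℝ) ∂ν) :
    ((P.snd.prod ν).prod volume).map (fun ω => (bernoulliDraw q ω, ω.1.1)) = P := by
  have pair_measurable : Measurable fun ω : (E × S) × I => (bernoulliDraw q ω, ω.1.1) :=
    (measurable_bernoulliDraw hq).prodMk (by fun_prop)
  refine measure_ext_of_ae_fst_eq_zero_or_one ?_ hP ?_ fun B hB => ?_
  · have binary_measurable : MeasurableSet {z : ℝ × E | z.1 = 0 ∨ z.1 = 1} :=
      measurable_fst (Set.toFinite {0, 1}).measurableSet
    exact (ae_map_iff pair_measurable.aemeasurable binary_measurable).2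
      (.of_forall (bernoulliDraw_eq_zero_or_one q))
  · rw [Measure.snd, Measure.map_map measurable_snd pair_measurable]
    exact (measurePreserving_fst.comp measurePreserving_fst).map_eq
  · have mean_measurable : StronglyMeasurable fun e => ∫ s, (q (e, s) : ℝ) ∂ν :=
      hq.subtype_val.stronglyMeasurable.integral_prod_right'
    calc ∫ z in Prod.snd ⁻¹' B, z.1 ∂((P.snd.prod ν).prod volume).map _
        = ∫ ω in (fun ω => ω.1.1) ⁻¹' B, bernoulliDraw q ω ∂(P.snd.prod ν).prod volume :=
          setIntegral_map (measurable_snd hB) measurable_fst.aestronglyMeasurable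
            pair_measurable.aemeasurable
      _ = ∫ e in B, ∫ s, (q (e, s) : ℝ) ∂ν ∂P.snd := setIntegral_bernoulliDraw_prod hq _ ν B
      _ = ∫ z in Prod.snd ⁻¹' B, ∫ s, (q (z.2, s) : ℝ) ∂ν ∂P :=
          setIntegral_map hB mean_measurable.aestronglyMeasurable measurable_snd.aemeasurable
      _ = ∫ z in Prod.snd ⁻¹' B, z.1 ∂P := by
          rw [← setIntegral_condExp measurable_snd.comap_le
            (integrable_of_ae_eq_zero_or_one measurable_fst.aemeasurable hP) ⟨B, hB, rfl⟩]
          exact integral_congr_ae (ae_restrict_of_ae hmean.symm)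

end BernoulliDraw

section ReportedLinkProb

variable {E : Type*}

/-- The probability that a link is reported given the covariates `a.1` and the shock `a.2`, when
the true link is `1{0 ≤ index a.1 + a.2}`, an absent link is reported with probability `r0`, and a
present one is omitted with probability `r1`. -/
noncomputable def reportedLinkProb (r0 r1 : I) (index : E → ℝ) (a : E × ℝ) : I :=
  if 0 ≤ index a.1 + a.2 then σ r1 else r0

lemma coe_reportedLinkProb (r0 r1 : I) (index : E → ℝ) (a : E × ℝ) :
    (reportedLinkProb r0 r1 index a : ℝ) =
      r0 + (1 - r0 - r1) * (if 0 ≤ index a.1 + a.2 then 1 else 0) := by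
  unfold reportedLinkProb
  split_ifs
  · rw [unitInterval.coe_symm_eq]
    ring
  · simp

lemma measurable_reportedLinkProb [MeasurableSpace E] (r0 r1 : I) {index : E → ℝ}
    (hindex : Measurable index) :
    Measurable (reportedLinkProb r0 r1 index) :=
  .ite (measurableSet_le measurable_const (by fun_prop)) measurable_const measurable_const

lemma integral_reportedLinkProb (r0 r1 : I) (index : E → ℝ) (ν : Measure ℝ)
    [IsProbabilityMeasure ν] (e : E) :
    ∫ s, (reportedLinkProb r0 r1 index (e, s) : ℝ) ∂ν =
      r0 + (1 - r0 - r1) * ν.real {s | 0 ≤ index e + s} := by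
  have link_measurable : MeasurableSet {s | 0 ≤ index e + s} :=
    measurableSet_le measurable_const (by fun_prop)
  have prob_eq : (fun s => (reportedLinkProb r0 r1 index (e, s) : ℝ)) =
      fun s => (r0 : ℝ) + (1 - r0 - r1) * {s | 0 ≤ index e + s}.indicator 1 s := by
    ext s
    simp [coe_reportedLinkProb, Set.indicator]
  rw [prob_eq, integral_add (integrable_const _)
      (((integrable_const 1).indicator link_measurable).const_mul _),
    integral_const_mul, integral_indicator_one link_measurable]
  simp

end ReportedLinkProb

lemma stdNormalPdf_eq_gaussianPDFReal : stdNormalPdf = gaussianPDFReal 0 1 := by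
  ext x
  simp [stdNormalPdf, gaussianPDFReal]

lemma measureReal_gaussianReal_Iic (t : ℝ) :
    (gaussianReal 0 1).real (Set.Iic t) = stdNormalCdf t := by
  rw [measureReal_def, gaussianReal_apply_eq_integral 0 one_ne_zero, ENNReal.toReal_ofReal
    (integral_nonneg fun x => gaussianPDFReal_nonneg 0 1 x), stdNormalCdf,
    stdNormalPdf_eq_gaussianPDFReal]

lemma measureReal_gaussianReal_zero_le_add (t : ℝ) :
    (gaussianReal 0 1).real {s | 0 ≤ t + s} = stdNormalCdf t := by
  have neg_preimage : {s : ℝ | 0 ≤ t + s} = (fun s => -s) ⁻¹' Set.Iic t := by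
    ext s
    simp [neg_le_iff_add_nonneg']
  rw [neg_preimage, ← map_measureReal_apply measurable_neg measurableSet_Iic, gaussianReal_map_neg,
    neg_zero, measureReal_gaussianReal_Iic]

universe u v

theorem identified_set_converse_general {𝒳 : Type u} {𝒴 : Type v} {𝒵 : Type*} [MeasurableSpace 𝒳]
    [MeasurableSpace 𝒴] [MeasurableSpace 𝒵] (r0 r1 : I) {belief : 𝒴 → 𝒵}
    (hbelief : Measurable belief) {index : 𝒵 × 𝒳 → ℝ} (hindex : Measurable index)
    (ν : Measure ℝ) [IsProbabilityMeasure ν] (P : Measure (ℝ × 𝒳 × 𝒴)) [IsProbabilityMeasure P]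
    (hP01 : ∀ᵐ p ∂P, p.1 = 0 ∨ p.1 = 1)
    (hmom : P[(fun p => p.1) | MeasurableSpace.comap Prod.snd inferInstance] =ᵐ[P]
      fun p => r0 + (1 - r0 - r1) * ν.real {s | 0 ≤ index (belief p.2.2, p.2.1) + s}) :
    ∃ (Ω : Type (max u v)) (𝒜 : MeasurableSpace Ω) (μ : Measure Ω), IsProbabilityMeasure μ ∧
      ∃ (G : Ω → ℝ) (X : Ω → 𝒳) (Γ : Ω → 𝒴) (Γs : Ω → 𝒵) (ε : Ω → ℝ),
        Measurable G ∧ Measurable X ∧ Measurable Γ ∧ Measurable Γs ∧ Measurable ε ∧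
        (∀ ω, G ω = 0 ∨ G ω = 1) ∧
        (μ.map (fun ω => (G ω, X ω, Γ ω)) = P) ∧
        (μ.map ε = ν) ∧
        Indep (MeasurableSpace.comap ε inferInstance)
          (MeasurableSpace.comap (fun ω => (X ω, Γ ω, Γs ω)) inferInstance) μ ∧
        (∀ᵐ ω ∂μ, Γs ω = belief (Γ ω)) ∧
        (μ[G | MeasurableSpace.comap (fun ω => (X ω, Γ ω, Γs ω, ε ω)) inferInstance]
          =ᵐ[μ] fun ω => r0 + (1 - r0 - r1) *
            (if 0 ≤ index (Γs ω, X ω) + ε ω then (1 : ℝ) else 0)) := by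
  let q : (𝒳 × 𝒴) × ℝ → I := reportedLinkProb r0 r1 fun e => index (belief e.2, e.1)
  have hq : Measurable q := measurable_reportedLinkProb r0 r1 (by fun_prop)
  have shock_map : ((P.snd.prod ν).prod (volume : Measure I)).map (fun ω => ω.1.2) = ν :=
    (measurePreserving_snd.comp measurePreserving_fst).map_eq
  refine ⟨((𝒳 × 𝒴) × ℝ) × I, inferInstance, (P.snd.prod ν).prod volume, inferInstance,
    bernoulliDraw q, fun ω => ω.1.1.1, fun ω => ω.1.1.2, fun ω => belief ω.1.1.2, fun ω => ω.1.2,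
    measurable_bernoulliDraw hq, by fun_prop, by fun_prop, by fun_prop, by fun_prop,
    bernoulliDraw_eq_zero_or_one q, ?law, shock_map, ?indep, .of_forall fun _ => rfl, ?condExp⟩
  case law =>
    exact map_bernoulliDraw_of_condExp_eq hq hP01 (by simpa only [q, integral_reportedLinkProb])
  case indep =>
    exact (indepFun_prod_prod_snd_fst P.snd ν volume).comp measurable_id
      (ψ := fun e : 𝒳 × 𝒴 => (e.1, e.2, belief e.2)) (by fun_prop)
  case condExp =>
    have comap_eq := comap_comp_of_leftInverse
      (φ := fun a : (𝒳 × 𝒴) × ℝ => (a.1.1, a.1.2, belief a.1.2, a.2))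
      (ψ := fun b => ((b.1, b.2.1), b.2.2.2)) (by fun_prop) (by fun_prop) (fun _ => rfl)
      (Prod.fst : ((𝒳 × 𝒴) × ℝ) × I → _)
    simp only [Function.comp_def] at comap_eq
    simpa only [comap_eq, q, coe_reportedLinkProb] using condExp_bernoulliDraw hq (P.snd.prod ν)

/-- converse direction of Theorem 1: if the observed-data
distribution `P` of `(g, x, γ)` satisfies the conditional moment equality
`E_P[g | (x,γ)] = r0 + (1 − r0 − r1)·Φ((c(r0,r1) + C(r0,r1)γ)·b1 + x·b2)`, then
there is a probability space carrying `(G, X, Γ, Γ*, ε)` consistent with all the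
conditions of the misclassified network formation model. -/
theorem identified_set_converse (d : ℕ) (hd : 1 ≤ d)
    (r0 r1 : ℝ) (hr0 : 0 ≤ r0) (hr1 : 0 ≤ r1) (hrsum : r0 + r1 < 1)
    (b1 : Fin 3 → ℝ) (b2 : Fin d → ℝ)
    (P : Measure (ℝ × (Fin d → ℝ) × (Fin 4 → ℝ))) [IsProbabilityMeasure P]
    (hP01 : ∀ᵐ p ∂P, p.1 = 0 ∨ p.1 = 1)
    (hmom : P[(fun p => p.1) | MeasurableSpace.comap Prod.snd inferInstance] =ᵐ[P]
      fun p => r0 + (1 - r0 - r1) *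
        stdNormalCdf ((cvec r0 r1 + (Cmat r0 r1).mulVec p.2.2) ⬝ᵥ b1 + p.2.1 ⬝ᵥ b2)) :
    ∃ (Ω : Type) (𝒜 : MeasurableSpace Ω) (μ : Measure Ω), IsProbabilityMeasure μ ∧
      ∃ (G : Ω → ℝ) (X : Ω → Fin d → ℝ) (Γ : Ω → Fin 4 → ℝ) (Γs : Ω → Fin 3 → ℝ)
        (ε : Ω → ℝ),
        Measurable G ∧ Measurable X ∧ Measurable Γ ∧ Measurable Γs ∧ Measurable ε ∧
        (∀ ω, G ω = 0 ∨ G ω = 1) ∧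
        (μ.map (fun ω => (G ω, X ω, Γ ω)) = P) ∧
        (μ.map ε = gaussianReal 0 1) ∧
        Indep (MeasurableSpace.comap ε inferInstance)
          (MeasurableSpace.comap (fun ω => (X ω, Γ ω, Γs ω)) inferInstance) μ ∧
        (∀ᵐ ω ∂μ, Γs ω = cvec r0 r1 + (Cmat r0 r1).mulVec (Γ ω)) ∧
        (μ[G | MeasurableSpace.comap (fun ω => (X ω, Γ ω, Γs ω, ε ω)) inferInstance]
          =ᵐ[μ] fun ω => r0 + (1 - r0 - r1) *
            (if 0 ≤ Γs ω ⬝ᵥ b1 + X ω ⬝ᵥ b2 + ε ω then (1 : ℝ) else 0)) := by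
  simp_rw [← measureReal_gaussianReal_zero_le_add] at hmom
  exact identified_set_converse_general ⟨r0, hr0, by linarith⟩ ⟨r1, hr1, by linarith⟩
    (belief := fun γ => cvec r0 r1 + (Cmat r0 r1).mulVec γ) (by fun_prop)
    (index := fun z => z.1 ⬝ᵥ b1 + z.2 ⬝ᵥ b2) (by fun_prop) (gaussianReal 0 1) P hP01 hmom
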